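/- Let α be a type and let A, B be lists over α, both of length 2. Let i ≥ 2 and m ≥ 1 be integers and set k = 2^i·m − 2^{i−1} + 1 (an odd integer). Then d((k+1)/2) < (i−1)·|S_{A,B}(m)|, where d is Stern's diatomic sequence. -/

import Mathlib

/-- Stern's diatomic sequence. -/
def stern : ℕ → ℕ
  | 0 => 0
  | 1 => 1
  | n + 2 =>
    if (n + 2) % 2 = 0 then stern ((n + 2) / 2)
    else stern ((n + 2) / 2) + stern ((n + 2) / 2 + 1)
decreasing_by all_goals omega

/-- OEIS A003602: a(1)=1, a(2n)=a(n), a(2n+1)=n+1. (a(0)=0 as junk value.) -/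
def aseq : ℕ → ℕ
  | 0 => 0
  | 1 => 1
  | n + 2 =>
    if (n + 2) % 2 = 0 then aseq ((n + 2) / 2)
    else (n + 2) / 2 + 1
decreasing_by all_goals omega

-- the modified sequence `a*`: zero at powers of two.
open Classical in
noncomputable def aStar (j : ℕ) : ℕ :=
  if ∃ k, j = 2 ^ k then 0 else aseq j

theorem aseq_le (n : ℕ) : aseq n ≤ n := by
  induction n using Nat.strong_induction_on with
  | _ n ih =>
    match n with
    | 0 => simp [aseq]
    | 1 => simp [aseq]
    | m + 2 =>
      rw [aseq]
      split
      · exact le_trans (ih ((m + 2) / 2) (by omega)) (by omega)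
      · omega

theorem aStar_le (j : ℕ) : aStar j ≤ j := by
  unfold aStar
  split
  · omega
  · exact aseq_le j

/-- The Markov-type sequence `S_{A,B}(n)`. -/
noncomputable def mseq {α : Type*} (A B : List α) : ℕ → List α
  | 0 => A
  | 1 => B
  | 2 => A ++ B
  | n + 3 =>
    if (n + 3) % 2 = 0 then
      mseq A B ((n + 3) / 2) ++ mseq A B (aseq ((n + 3) / 2))
    else
      mseq A B (aStar ((n + 4) / 2 - 1)) ++ mseq A B ((n + 4) / 2)
decreasing_by
  all_goals first
    | omega
    | exact lt_of_le_of_lt (aseq_le _) (by omega)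
    | exact lt_of_le_of_lt (aStar_le _) (by omega)

/-!
If `A` and `B` both have length at least `c`, then `|S(m)| ≥ c · d(2m - 1)`. Indeed
`d(2a(j) - 1) = d(j)`, so the recurrences of `S` match `d(4j - 1) = d(2j - 1) + d(j)` and
`d(4j + 1) = d(j) + d(2j + 1)`; the value `0` of `a*` at powers of two is harmless because
`d(2 ^ k) = 1`.

For `k = 2^i m - 2^(i-1) + 1` we have `(k + 1) / 2 = 2^(i-2) (2m - 1) + 1`, so that
`d((k + 1) / 2) = (i - 2) d(2m - 1) + d(m)`, where `d(2m - 1) ≤ |S(m)|` by the bound with `c = 1`.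
Moreover `d(m) < |S(m)|`: for `m ≥ 2` because `d(2m - 1) = d(m - 1) + d(m) > d(m)`, and for
`m = 1` because `S(1) = B` has at least two entries.
-/

theorem stern_two_mul (n : ℕ) : stern (2 * n) = stern n := by
  rcases n with _ | n
  · rfl
  · rw [show 2 * (n + 1) = 2 * n + 2 by ring, stern, if_pos (by omega),
      show (2 * n + 2) / 2 = n + 1 by omega]

theorem stern_two_mul_add_one (n : ℕ) : stern (2 * n + 1) = stern n + stern (n + 1) := by
  rcases n with _ | n
  · simp [stern]
  · rw [show 2 * (n + 1) + 1 = (2 * n + 1) + 2 by ring, stern, if_neg (by omega),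
      show (2 * n + 1 + 2) / 2 = n + 1 by omega]

theorem stern_pos {n : ℕ} (hn : n ≠ 0) : 0 < stern n := by
  induction n using Nat.strong_induction_on with
  | _ n ih =>
    obtain ⟨k, rfl | rfl⟩ := Nat.even_or_odd' n
    · rw [stern_two_mul]
      exact ih k (by omega) (by omega)
    · rw [stern_two_mul_add_one]
      rcases eq_or_ne k 0 with rfl | hk
      · simp [stern]
      · exact Nat.add_pos_left (ih k (by omega) hk) _

theorem stern_four_mul_sub_one (n : ℕ) : stern (4 * n - 1) = stern (2 * n - 1) + stern n := by
  rcases eq_or_ne n 0 with rfl | hn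
  · simp [stern]
  · rw [show 4 * n - 1 = 2 * (2 * n - 1) + 1 by omega, stern_two_mul_add_one,
      show 2 * n - 1 + 1 = 2 * n by omega, stern_two_mul]

theorem stern_four_mul_add_one (n : ℕ) : stern (4 * n + 1) = stern n + stern (2 * n + 1) := by
  rw [show 4 * n + 1 = 2 * (2 * n) + 1 by ring, stern_two_mul_add_one, stern_two_mul]

theorem stern_two_pow_mul (j n : ℕ) : stern (2 ^ j * n) = stern n := by
  induction j with
  | zero => simp
  | succ j ih => rw [pow_succ', mul_assoc, stern_two_mul, ih]

theorem stern_two_pow (k : ℕ) : stern (2 ^ k) = 1 := by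
  simpa [stern] using stern_two_pow_mul k 1

theorem stern_two_pow_mul_add_one (j n : ℕ) :
    stern (2 ^ j * n + 1) = j * stern n + stern (n + 1) := by
  induction j with
  | zero => simp
  | succ j ih =>
    rw [pow_succ', mul_assoc, stern_two_mul_add_one, stern_two_pow_mul, ih]
    ring

theorem aseq_two_mul (n : ℕ) : aseq (2 * n) = aseq n := by
  rcases n with _ | n
  · rfl
  · rw [show 2 * (n + 1) = 2 * n + 2 by ring, aseq, if_pos (by omega),
      show (2 * n + 2) / 2 = n + 1 by omega]

theorem aseq_two_mul_add_one (n : ℕ) : aseq (2 * n + 1) = n + 1 := by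
  rcases n with _ | n
  · simp [aseq]
  · rw [show 2 * (n + 1) + 1 = (2 * n + 1) + 2 by ring, aseq, if_neg (by omega)]
    omega

-- `2 * aseq n - 1` is the odd part of `n`; at `n = 0` truncated subtraction makes both sides `0`.
theorem stern_two_mul_aseq_sub_one (n : ℕ) : stern (2 * aseq n - 1) = stern n := by
  induction n using Nat.strong_induction_on with
  | _ n ih =>
    obtain ⟨k, rfl | rfl⟩ := Nat.even_or_odd' n
    · rcases eq_or_ne k 0 with rfl | hk
      · simp [aseq]
      · rw [aseq_two_mul, stern_two_mul, ih k (by omega)]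
    · rw [aseq_two_mul_add_one, show 2 * (k + 1) - 1 = 2 * k + 1 by omega]

section mseq

variable {α : Type*} {A B : List α}

theorem mseq_two_mul {j : ℕ} (hj : 2 ≤ j) :
    mseq A B (2 * j) = mseq A B j ++ mseq A B (aseq j) := by
  obtain ⟨n, hn⟩ : ∃ n, 2 * j = n + 3 := ⟨2 * j - 3, by omega⟩
  rw [hn, mseq, if_pos (by omega), show (n + 3) / 2 = j by omega]

theorem mseq_two_mul_add_one {j : ℕ} (hj : j ≠ 0) :
    mseq A B (2 * j + 1) = mseq A B (aStar j) ++ mseq A B (j + 1) := by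
  obtain ⟨n, hn⟩ : ∃ n, 2 * j + 1 = n + 3 := ⟨2 * j - 2, by omega⟩
  rw [hn, mseq, if_neg (by omega), show (n + 4) / 2 = j + 1 by omega, Nat.add_sub_cancel]

theorem mul_stern_le_length_mseq {c : ℕ} (hA : c ≤ A.length) (hB : c ≤ B.length) (m : ℕ) :
    c * stern (2 * m - 1) ≤ (mseq A B m).length := by
  induction m using Nat.strong_induction_on with
  | _ m ih =>
    have le_length_aseq {j : ℕ} (hj : j < m) : c * stern j ≤ (mseq A B (aseq j)).length := by
      simpa only [stern_two_mul_aseq_sub_one] using ih (aseq j) ((aseq_le j).trans_lt hj)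
    have le_length_aStar {j : ℕ} (hj : j < m) : c * stern j ≤ (mseq A B (aStar j)).length := by
      unfold aStar
      split_ifs with hpow
      · obtain ⟨k, rfl⟩ := hpow
        simpa [stern_two_pow, mseq] using hA
      · exact le_length_aseq hj
    obtain ⟨j, rfl | rfl⟩ := Nat.even_or_odd' m
    · obtain rfl | rfl | hj : j = 0 ∨ j = 1 ∨ 2 ≤ j := by omega
      · simp [stern]
      · have stern_three : stern 3 = 2 := by simp [stern]
        rw [mseq, List.length_append, show 2 * (2 * 1) - 1 = 3 from rfl, stern_three, mul_two]
        exact add_le_add hA hB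
      · rw [mseq_two_mul hj, List.length_append,
          show 2 * (2 * j) - 1 = 4 * j - 1 by omega, stern_four_mul_sub_one, mul_add]
        exact add_le_add (ih j (by omega)) (le_length_aseq (by omega))
    · rcases eq_or_ne j 0 with rfl | hj
      · simpa [stern, mseq] using hB
      · rw [mseq_two_mul_add_one hj, List.length_append,
          show 2 * (2 * j + 1) - 1 = 4 * j + 1 by omega, stern_four_mul_add_one, mul_add]
        exact add_le_add (le_length_aStar (by omega)) (ih (j + 1) (by omega))

theorem stern_le_length_mseq (hA : A ≠ []) (hB : B ≠ []) (m : ℕ) :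
    stern (2 * m - 1) ≤ (mseq A B m).length := by
  simpa only [one_mul] using
    mul_stern_le_length_mseq (c := 1) (List.length_pos_iff.2 hA) (List.length_pos_iff.2 hB) m

theorem stern_lt_length_mseq (hA : A ≠ []) (hB : 2 ≤ B.length) (m : ℕ) :
    stern m < (mseq A B m).length := by
  obtain rfl | rfl | ⟨n, hn, rfl⟩ : m = 0 ∨ m = 1 ∨ ∃ n, n ≠ 0 ∧ m = n + 1 := by
    rcases m with _ | _ | n <;> simp
  · simpa [stern, mseq] using List.length_pos_iff.2 hA
  · rwa [stern, mseq]
  · have hB' : B ≠ [] := List.length_pos_iff.1 (by omega)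
    calc stern (n + 1) < stern n + stern (n + 1) := Nat.lt_add_of_pos_left (stern_pos hn)
      _ = stern (2 * (n + 1) - 1) := (stern_two_mul_add_one n).symm
      _ ≤ (mseq A B (n + 1)).length := stern_le_length_mseq hA hB' (n + 1)

theorem stmt15_general (hA : A ≠ []) (hB : 2 ≤ B.length) {i m : ℕ} (hi : 2 ≤ i) (hm : 1 ≤ m) :
    stern ((2 ^ i * m - 2 ^ (i - 1) + 1 + 1) / 2) < (i - 1) * (mseq A B m).length := by
  obtain ⟨j, rfl⟩ := Nat.exists_eq_add_of_le' hi
  obtain ⟨n, rfl⟩ := Nat.exists_eq_add_of_le' hm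
  have index_eq :
      (2 ^ (j + 2) * (n + 1) - 2 ^ (j + 1) + 1 + 1) / 2 = 2 ^ j * (2 * n + 1) + 1 := by
    have : 2 ^ (j + 2) * (n + 1) = 2 * (2 ^ j * (2 * n + 1)) + 2 ^ (j + 1) := by ring
    omega
  have hB' : B ≠ [] := List.length_pos_iff.1 (by omega)
  calc stern ((2 ^ (j + 2) * (n + 1) - 2 ^ (j + 1) + 1 + 1) / 2)
      = j * stern (2 * n + 1) + stern (2 * (n + 1)) := by
        rw [index_eq, stern_two_pow_mul_add_one, mul_add_one 2 n]
    _ = j * stern (2 * n + 1) + stern (n + 1) := by rw [stern_two_mul]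
    _ < j * (mseq A B (n + 1)).length + (mseq A B (n + 1)).length :=
        add_lt_add_of_le_of_lt (Nat.mul_le_mul_left j (stern_le_length_mseq hA hB' (n + 1)))
          (stern_lt_length_mseq hA hB (n + 1))
    _ = (j + 1) * (mseq A B (n + 1)).length := (Nat.succ_mul _ _).symm

end mseq

/-- for `A`, `B` of length 2, `i ≥ 2`, `m ≥ 1` and
`k = 2^i·m − 2^{i−1} + 1`, one has `d((k+1)/2) < (i−1)·|S_{A,B}(m)|`. -/
theorem stmt15 {α : Type*} (A B : List α) (hA : A.length = 2) (hB : B.length = 2)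
    (i m : ℕ) (hi : 2 ≤ i) (hm : 1 ≤ m) :
    stern ((2 ^ i * m - 2 ^ (i - 1) + 1 + 1) / 2) < (i - 1) * (mseq A B m).length := by
  exact stmt15_general (List.length_pos_iff.1 (by omega)) hB.ge hi hm
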